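/- Local polynomial weights satisfy the weight assumptions: let the kernel K : ℝ² → [0,∞) have compact support in [−1,1]², be Lipschitz continuous, and satisfy K_min 𝟙{−Δ ≤ u₁,u₂ ≤ Δ} ≤ K(u₁,u₂) ≤ K_max for constants Δ, K_min, K_max > 0. Under Assumption 4 there exist a sufficiently large p₀ ∈ ℕ, a sufficiently small h₀ > 0 and a sufficiently large constant c > 0 such that for all p ≥ p₀ and h ∈ (c/p, h₀] the restricted bivariate local polynomial estimator of any order m ∈ ℕ (least squares over pairs j < k) is unique, is a linear estimator of the form Σ_{j<k} w_{j,k}(x,y;h) z_{j,k}, and its weights satisfy (W1) with reproduction degree m, (W2), (W3) and (W4). -/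

import Mathlib

open Set

/-- The closed upper triangle `T = {(x,y) ∈ [0,1]² : x ≤ y}`. -/
def upperT : Set (ℝ × ℝ) :=
  {z | z.1 ∈ Set.Icc (0:ℝ) 1 ∧ z.2 ∈ Set.Icc (0:ℝ) 1 ∧ z.1 ≤ z.2}

/-- Sum over pairs `j < k` of design indices. -/
def pairSum {p : ℕ} (g : Fin p → Fin p → ℝ) : ℝ :=
  ∑ j : Fin p, ∑ k : Fin p, if j < k then g j k else 0

/-- Assumption 4 (design density). -/
def DesignQuantile {p : ℕ} (f : ℝ → ℝ) (fmin fmax : ℝ) (x : Fin p → ℝ) : Prop :=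
  0 < fmin ∧ fmin ≤ fmax ∧
  (∃ Kf : NNReal, LipschitzOnWith Kf f (Set.Icc 0 1)) ∧
  (∀ t ∈ Set.Icc (0:ℝ) 1, fmin ≤ f t ∧ f t ≤ fmax) ∧
  (∫ t in (0:ℝ)..1, f t) = 1 ∧
  ∀ j : Fin p, x j ∈ Set.Icc (0:ℝ) 1 ∧
    (∫ t in (0:ℝ)..(x j), f t) = ((j : ℝ) + 1 - 0.5) / p

/-- Index set of the monomials of total degree `≤ m`; cardinality `N_m = (m+1)(m+2)/2`. -/
def MIdx (m : ℕ) := {q : Fin (m + 1) × Fin (m + 1) // (q.1 : ℕ) + (q.2 : ℕ) ≤ m}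

instance (m : ℕ) : Fintype (MIdx m) := by unfold MIdx; infer_instance
instance (m : ℕ) : DecidableEq (MIdx m) := by unfold MIdx; infer_instance

/-- The entries of the vector `U_m(u₁,u₂)` of factorial-weighted monomials; the entry
indexed by `(0,0)` is the constant `1`. -/
noncomputable def Umon (m : ℕ) (q : MIdx m) (u : ℝ × ℝ) : ℝ :=
  u.1 ^ (q.1.1 : ℕ) * u.2 ^ (q.1.2 : ℕ) /
    (((q.1.1 : ℕ).factorial : ℝ) * ((q.1.2 : ℕ).factorial : ℝ))

/-- The weighted least-squares criterion of the restricted bivariate local polynomial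
estimator of order `m` at `z = (x,y) ∈ T` with bandwidth `h` and data `(z_{jk})_{j<k}`. -/
noncomputable def lpLoss {p : ℕ} (m : ℕ) (K : ℝ × ℝ → ℝ) (x : Fin p → ℝ) (h : ℝ)
    (z : ℝ × ℝ) (data : Fin p → Fin p → ℝ) (θ : MIdx m → ℝ) : ℝ :=
  pairSum (fun j k =>
    (data j k - ∑ q : MIdx m, θ q * Umon m q ((x j - z.1) / h, (x k - z.2) / h)) ^ 2 *
      K ((x j - z.1) / h, (x k - z.2) / h))

/-!
The estimator at `z` solves the normal equations with Gram operator
`G = ∑ K(u) ⟪φ(u), ·⟫ φ(u)`, where `u` runs over the scaled pairs and `φ = U_m`, and its weights are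
`w = K(u) ⟪φ(u), G⁻¹ b⟫` with `b` the constant monomial. Everything follows from coercivity of `G`
with a constant `μ (ph)²`.

Near `z`, at distances of order `h`, lie two intervals of length of order `h` whose product is above
the diagonal; inside each of them the design has of order `ph` points in each of `m + 1` separated
slots. One point per slot gives a grid on which a polynomial of degree `m` cannot vanish, and
quantitatively so by compactness of the set of separated node vectors; choosing in each slot the
point with the smallest contribution bounds `⟪G v, v⟫` from below.

Then (W1) is the exactness of least squares on polynomials, (W2) is the support of `K`, and (W3) is
`‖G⁻¹‖ ≤ 1 / (μ (ph)²)`. For (W4), moving `z` by `th` changes `G` by at most a multiple of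
`t (ph)²`, since only of order `(ph)²` pairs are within distance `h`, and the resolvent identity
`G⁻¹ - G'⁻¹ = G⁻¹ (G' - G) G'⁻¹` turns this into a change of `G⁻¹` of order `t / (ph)²`.
-/

open Finset InnerProductSpace
open scoped NNReal RealInnerProductSpace Ring Function

section Coercive

variable {E : Type*} [NormedAddCommGroup E] [InnerProductSpace ℝ E]

/-- Coercivity of an operator on a real Hilbert space, with the constant `μ > 0` recorded: all
estimates below depend on `A` only through `μ`. -/
structure IsCoerciveWith (A : E →L[ℝ] E) (μ : ℝ) : Prop where
  pos : 0 < μ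
  mul_norm_sq_le (v : E) : μ * ‖v‖ ^ 2 ≤ ⟪A v, v⟫

namespace IsCoerciveWith

variable {A B : E →L[ℝ] E} {μ : ℝ}

variable [CompleteSpace E]

theorem isUnit (hA : IsCoerciveWith A μ) : IsUnit A := by
  refine ContinuousLinearMap.isUnit_of_forall_le_norm_inner_map A (c := ⟨μ, hA.pos.le⟩) hA.pos
    fun v => ?_
  rw [mul_comm]
  exact (hA.mul_norm_sq_le v).trans (Real.le_norm_self _)

theorem apply_inverse (hA : IsCoerciveWith A μ) (b : E) : A (A⁻¹ʳ b) = b := by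
  rw [← mul_apply_eq_comp, Ring.mul_inverse_cancel A hA.isUnit,
    one_apply_eq_self]

theorem norm_inverse_le (hA : IsCoerciveWith A μ) : ‖A⁻¹ʳ‖ ≤ μ⁻¹ := by
  refine ContinuousLinearMap.opNorm_le_bound _ (inv_nonneg.2 hA.pos.le) fun b => ?_
  rw [inv_mul_eq_div, le_div_iff₀' hA.pos]
  set g := A⁻¹ʳ b with hg
  have hsq : μ * ‖g‖ * ‖g‖ ≤ ‖b‖ * ‖g‖ := calc
    μ * ‖g‖ * ‖g‖ = μ * ‖g‖ ^ 2 := by ring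
    _ ≤ ⟪A g, g⟫ := hA.mul_norm_sq_le g
    _ = ⟪b, g⟫ := by rw [hg, hA.apply_inverse]
    _ ≤ ‖b‖ * ‖g‖ := real_inner_le_norm b g
  rcases (norm_nonneg g).eq_or_lt with h0 | hpos
  · simp [← h0]
  · exact le_of_mul_le_mul_right hsq hpos

theorem norm_inverse_sub_inverse_le (hA : IsCoerciveWith A μ) (hB : IsCoerciveWith B μ) :
    ‖A⁻¹ʳ - B⁻¹ʳ‖ ≤ ‖A - B‖ / μ ^ 2 := by
  have hμ := hA.pos
  rw [Ring.inverse_sub_inverse (iff_of_true hA.isUnit hB.isUnit)]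
  calc ‖A⁻¹ʳ * (B - A) * B⁻¹ʳ‖ ≤ ‖A⁻¹ʳ‖ * ‖B - A‖ * ‖B⁻¹ʳ‖ := norm_mul₃_le
    _ ≤ μ⁻¹ * ‖B - A‖ * μ⁻¹ := by
        gcongr
        exacts [hA.norm_inverse_le, hB.norm_inverse_le]
    _ = ‖A - B‖ / μ ^ 2 := by
        rw [norm_sub_rev]
        field_simp

end IsCoerciveWith

end Coercive

section LeastSquares

variable {J E : Type*} [NormedAddCommGroup E] [InnerProductSpace ℝ E]

/-- The Gram operator `v ↦ ∑ κₑ ⟪ψₑ, v⟫ ψₑ` of the features `ψ` with weights `κ`, i.e. the matrix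
of the normal equations. -/
noncomputable def gramOp (P : Finset J) (κ : J → ℝ) (ψ : J → E) : E →L[ℝ] E :=
  ∑ e ∈ P, κ e • rankOne ℝ (ψ e) (ψ e)

/-- The weighted least-squares criterion for fitting `d` by linear functionals of the features. -/
noncomputable def weightedLoss (P : Finset J) (κ : J → ℝ) (ψ : J → E) (d : J → ℝ) (θ : E) : ℝ :=
  ∑ e ∈ P, (d e - ⟪ψ e, θ⟫) ^ 2 * κ e

/-- The solution of the normal equations; it is the weighted least-squares estimator when the Gram
operator is invertible. -/
noncomputable def lsEstimator (P : Finset J) (κ : J → ℝ) (ψ : J → E) (d : J → ℝ) : E :=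
  (gramOp P κ ψ)⁻¹ʳ (∑ e ∈ P, (κ e * d e) • ψ e)

/-- The weight of the observation `e` in the estimator `⟪b, lsEstimator P κ ψ d⟫` of the linear
functional `⟪b, ·⟫`. -/
noncomputable def lsWeight (P : Finset J) (κ : J → ℝ) (ψ : J → E) (b : E) (e : J) : ℝ :=
  ⟪κ e • ψ e, (gramOp P κ ψ)⁻¹ʳ b⟫

variable {P : Finset J} {κ : J → ℝ} {ψ : J → E} {μ : ℝ}

theorem inner_gramOp (v w : E) :
    ⟪gramOp P κ ψ v, w⟫ = ∑ e ∈ P, κ e * (⟪ψ e, v⟫ * ⟪ψ e, w⟫) := by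
  simp [gramOp, sum_inner, real_inner_smul_left]

theorem inner_gramOp_comm (v w : E) : ⟪gramOp P κ ψ v, w⟫ = ⟪v, gramOp P κ ψ w⟫ := by
  simp only [real_inner_comm _ v, inner_gramOp, mul_comm]

theorem weightedLoss_add {d : J → ℝ} {θ : E}
    (hθ : gramOp P κ ψ θ = ∑ e ∈ P, (κ e * d e) • ψ e) (v : E) :
    weightedLoss P κ ψ d (θ + v) = weightedLoss P κ ψ d θ + ⟪gramOp P κ ψ v, v⟫ := by
  have horth : ∑ e ∈ P, κ e * (⟪ψ e, θ⟫ * ⟪ψ e, v⟫) = ∑ e ∈ P, κ e * d e * ⟪ψ e, v⟫ := by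
    rw [← inner_gramOp, hθ]
    simp only [sum_inner, real_inner_smul_left]
  calc weightedLoss P κ ψ d (θ + v)
      = weightedLoss P κ ψ d θ + ∑ e ∈ P, κ e * (⟪ψ e, v⟫ * ⟪ψ e, v⟫) +
          2 * (∑ e ∈ P, κ e * (⟪ψ e, θ⟫ * ⟪ψ e, v⟫) - ∑ e ∈ P, κ e * d e * ⟪ψ e, v⟫) := by
        rw [weightedLoss, weightedLoss, ← sum_sub_distrib, mul_sum, ← sum_add_distrib,
          ← sum_add_distrib]
        refine sum_congr rfl fun e _ => ?_
        rw [inner_add_right]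
        ring
    _ = weightedLoss P κ ψ d θ + ⟪gramOp P κ ψ v, v⟫ := by
        rw [horth, sub_self, mul_zero, add_zero, inner_gramOp]

variable [CompleteSpace E]

theorem forall_weightedLoss_le_iff (hG : IsCoerciveWith (gramOp P κ ψ) μ) {d : J → ℝ} {θ : E} :
    (∀ θ', weightedLoss P κ ψ d θ ≤ weightedLoss P κ ψ d θ') ↔ θ = lsEstimator P κ ψ d := by
  have hexcess (θ' : E) : weightedLoss P κ ψ d (lsEstimator P κ ψ d) +
      μ * ‖θ' - lsEstimator P κ ψ d‖ ^ 2 ≤ weightedLoss P κ ψ d θ' := by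
    have hadd := weightedLoss_add (d := d) (θ := lsEstimator P κ ψ d) (hG.apply_inverse _)
      (θ' - lsEstimator P κ ψ d)
    rw [add_sub_cancel] at hadd
    rw [hadd]
    gcongr
    exact hG.mul_norm_sq_le _
  constructor
  · intro hθ
    have hle : ‖θ - lsEstimator P κ ψ d‖ ^ 2 ≤ 0 :=
      nonpos_of_mul_nonpos_right (by linarith [hexcess θ, hθ (lsEstimator P κ ψ d)]) hG.pos
    exact sub_eq_zero.1 (norm_eq_zero.1 (pow_eq_zero_iff two_ne_zero |>.1
      (hle.antisymm (sq_nonneg _))))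
  · rintro rfl θ'
    exact (le_add_of_nonneg_right (mul_nonneg hG.pos.le (sq_nonneg _))).trans (hexcess θ')

theorem inner_lsEstimator (hG : IsCoerciveWith (gramOp P κ ψ) μ) (b : E) (d : J → ℝ) :
    ⟪b, lsEstimator P κ ψ d⟫ = ∑ e ∈ P, lsWeight P κ ψ b e * d e := by
  nth_rw 1 [← hG.apply_inverse b]
  rw [inner_gramOp_comm, lsEstimator, hG.apply_inverse, inner_sum]
  refine sum_congr rfl fun e _ => ?_
  rw [lsWeight, real_inner_smul_right, real_inner_smul_left, real_inner_comm]
  ring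

theorem sum_lsWeight_mul_inner (hG : IsCoerciveWith (gramOp P κ ψ) μ) (b v : E) :
    ∑ e ∈ P, lsWeight P κ ψ b e * ⟪ψ e, v⟫ = ⟪b, v⟫ := by
  nth_rw 2 [← hG.apply_inverse b]
  rw [inner_gramOp]
  refine sum_congr rfl fun e _ => ?_
  rw [lsWeight, real_inner_smul_left, mul_assoc]

end LeastSquares

section LipschitzKernel

variable {V F : Type*} [NormedAddCommGroup V] [NormedAddCommGroup F]

theorem norm_sum_sub_sum_le {J : Type*} {P : Finset J} {H : V → F} {L : ℝ≥0} {u u' : J → V}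
    {t N : ℝ} (hH : LipschitzWith L H) (hH' : ∀ v, 1 < ‖v‖ → H v = 0) (ht : 0 ≤ t)
    (huu' : ∀ e ∈ P, ‖u e - u' e‖ ≤ t) (hu : #{e ∈ P | ‖u e‖ ≤ 1} ≤ N)
    (hu' : #{e ∈ P | ‖u' e‖ ≤ 1} ≤ N) :
    ‖∑ e ∈ P, H (u e) - ∑ e ∈ P, H (u' e)‖ ≤ 2 * N * (L * t) := by
  have hcard : (#{e ∈ P | ‖u e‖ ≤ 1 ∨ ‖u' e‖ ≤ 1} : ℝ) ≤ 2 * N := by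
    classical
    have hle := Finset.card_union_le {e ∈ P | ‖u e‖ ≤ 1} {e ∈ P | ‖u' e‖ ≤ 1}
    rw [← filter_or] at hle
    rify at hle
    linarith
  have hoff (e : J) (_ : e ∈ P) (hne : H (u e) - H (u' e) ≠ 0) : ‖u e‖ ≤ 1 ∨ ‖u' e‖ ≤ 1 := by
    contrapose! hne
    rw [hH' _ hne.1, hH' _ hne.2, sub_zero]
  rw [← sum_sub_distrib, ← sum_filter_of_ne hoff]
  calc ‖∑ e ∈ P with ‖u e‖ ≤ 1 ∨ ‖u' e‖ ≤ 1, (H (u e) - H (u' e))‖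
      ≤ ∑ e ∈ P with ‖u e‖ ≤ 1 ∨ ‖u' e‖ ≤ 1, L * t := norm_sum_le_of_le _ fun e he =>
        (hH.norm_sub_le _ _).trans (by gcongr; exact huu' e (filter_subset _ _ he))
    _ = #{e ∈ P | ‖u e‖ ≤ 1 ∨ ‖u' e‖ ≤ 1} * (L * t) := by rw [sum_const, nsmul_eq_mul]
    _ ≤ 2 * N * (L * t) := by gcongr

variable [NormedSpace ℝ V] [NormedSpace ℝ F]

theorem exists_lipschitzWith_smul_of_hasCompactSupport [ProperSpace V] {K : V → ℝ} {φ : V → F}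
    {L : ℝ≥0} (hK : LipschitzWith L K) (hK' : HasCompactSupport K) (hφ : ContDiff ℝ 1 φ) :
    ∃ C, LipschitzWith C fun u => K u • φ u := by
  obtain ⟨R, hR0, hR⟩ := hK'.isCompact.isBounded.subset_closedBall_lt 0 (0 : V)
  have hcomp := isCompact_closedBall (0 : V) R
  have hKR {u : V} (hu : u ∉ Metric.closedBall 0 R) : K u = 0 :=
    image_eq_zero_of_notMem_tsupport (notMem_subset hR hu)
  obtain ⟨A, hA⟩ := hK'.exists_bound_of_continuous hK.continuous
  obtain ⟨B, hB⟩ := hcomp.exists_bound_of_continuousOn hφ.continuous.continuousOn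
  obtain ⟨D, hD⟩ := hφ.contDiffOn.exists_lipschitzOnWith one_ne_zero (convex_closedBall 0 R) hcomp
  have hA0 : 0 ≤ A := (norm_nonneg _).trans (hA 0)
  have hB0 : 0 ≤ B := (norm_nonneg _).trans (hB 0 (Metric.mem_closedBall_self hR0.le))
  have hmain {u v : V} (hu : u ∈ Metric.closedBall 0 R) :
      ‖K u • φ u - K v • φ v‖ ≤ (L * B + A * D) * ‖u - v‖ := by
    have hKL : ‖K u - K v‖ * ‖φ u‖ ≤ L * ‖u - v‖ * B := by
      gcongr
      exacts [hK.norm_sub_le u v, hB u hu]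
    have hsplit : K u • φ u - K v • φ v = (K u - K v) • φ u + K v • (φ u - φ v) := by
      rw [sub_smul, smul_sub]
      abel
    have hKφ : ‖K v‖ * ‖φ u - φ v‖ ≤ A * (D * ‖u - v‖) := by
      by_cases hv : v ∈ Metric.closedBall 0 R
      · gcongr
        exacts [hA v, hD.norm_sub_le hu hv]
      · rw [hKR hv, norm_zero, zero_mul]
        positivity
    rw [hsplit]
    refine (norm_add_le _ _).trans ?_
    rw [norm_smul, norm_smul]
    linarith
  refine ⟨(L * B + A * D).toNNReal, LipschitzWith.of_dist_le' fun u v => ?_⟩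
  rw [dist_eq_norm, dist_eq_norm]
  by_cases hu : u ∈ Metric.closedBall 0 R
  · exact hmain hu
  by_cases hv : v ∈ Metric.closedBall 0 R
  · rw [norm_sub_rev, norm_sub_rev u v]
    exact hmain hv
  · rw [hKR hu, hKR hv, zero_smul, zero_smul, sub_zero, norm_zero]
    positivity

end LipschitzKernel

section LocalLeastSquares

variable {V J E : Type*} [NormedAddCommGroup E] [InnerProductSpace ℝ E]

/-- The Gram operator of the features `φ (u e)` weighted by `K (u e)`: the observations are
localised by a kernel `K` of their scaled positions `u`. -/
noncomputable def localGram (K : V → ℝ) (φ : V → E) (P : Finset J) (u : J → V) : E →L[ℝ] E :=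
  gramOp P (K ∘ u) (φ ∘ u)

/-- The weight of the observation `e` in the kernel-localised least-squares estimator of the linear
functional `⟪b, ·⟫`. -/
noncomputable def localWeight (K : V → ℝ) (φ : V → E) (b : E) (P : Finset J) (u : J → V) (e : J) :
    ℝ :=
  lsWeight P (K ∘ u) (φ ∘ u) b e

variable {K : V → ℝ} {φ : V → E} {P : Finset J} {u u' : J → V} {μ : ℝ}

theorem abs_localWeight_le [CompleteSpace E] {M : ℝ} (hG : IsCoerciveWith (localGram K φ P u) μ)
    (hM : ∀ v, ‖K v • φ v‖ ≤ M) (b : E) (e : J) : |localWeight K φ b P u e| ≤ M * ‖b‖ / μ := by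
  have hM0 : 0 ≤ M := (norm_nonneg _).trans (hM (u e))
  calc |localWeight K φ b P u e| ≤ ‖K (u e) • φ (u e)‖ * ‖(localGram K φ P u)⁻¹ʳ b‖ :=
        abs_real_inner_le_norm _ _
    _ ≤ M * (μ⁻¹ * ‖b‖) := by
        gcongr
        · exact hM _
        · exact ContinuousLinearMap.le_of_opNorm_le _ hG.norm_inverse_le b
    _ = M * ‖b‖ / μ := by ring

variable [NormedAddCommGroup V]

theorem norm_localGram_sub_le {L : ℝ≥0} {t N : ℝ}
    (hL : LipschitzWith L fun v => K v • rankOne ℝ (φ v) (φ v)) (hK : ∀ v, 1 < ‖v‖ → K v = 0)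
    (ht : 0 ≤ t) (huu' : ∀ e ∈ P, ‖u e - u' e‖ ≤ t) (hu : #{e ∈ P | ‖u e‖ ≤ 1} ≤ N)
    (hu' : #{e ∈ P | ‖u' e‖ ≤ 1} ≤ N) :
    ‖localGram K φ P u - localGram K φ P u'‖ ≤ 2 * N * (L * t) :=
  norm_sum_sub_sum_le hL (fun v hv => by rw [hK v hv, zero_smul]) ht huu' hu hu'

theorem contDiff_rankOne_self [NormedSpace ℝ V] [FiniteDimensional ℝ E] {n : WithTop ℕ∞}
    (hφ : ContDiff ℝ n φ) : ContDiff ℝ n fun v => rankOne ℝ (φ v) (φ v) := by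
  refine contDiff_clm_apply_iff.2 fun w => ?_
  simp only [rankOne_apply]
  exact (hφ.inner ℝ contDiff_const).smul hφ

theorem abs_localWeight_sub_le [CompleteSpace E] {L : ℝ≥0} {M t D : ℝ}
    (hG : IsCoerciveWith (localGram K φ P u) μ) (hG' : IsCoerciveWith (localGram K φ P u') μ)
    (hM : ∀ v, ‖K v • φ v‖ ≤ M) (hL : LipschitzWith L fun v => K v • φ v)
    (hD : ‖localGram K φ P u - localGram K φ P u'‖ ≤ D) (b : E) {e : J} (ht : ‖u e - u' e‖ ≤ t) :
    |localWeight K φ b P u e - localWeight K φ b P u' e| ≤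
      (L * t / μ + M * D / μ ^ 2) * ‖b‖ := by
  have hμ := hG.pos
  have hM0 : 0 ≤ M := (norm_nonneg _).trans (hM (u e))
  have hLt : ‖K (u e) • φ (u e) - K (u' e) • φ (u' e)‖ ≤ L * t :=
    (hL.norm_sub_le _ _).trans (by gcongr)
  set a := K (u e) • φ (u e)
  set a' := K (u' e) • φ (u' e)
  set G := localGram K φ P u
  set G' := localGram K φ P u'
  have hsplit : localWeight K φ b P u e - localWeight K φ b P u' e =
      ⟪a - a', G⁻¹ʳ b⟫ + ⟪a', (G⁻¹ʳ - G'⁻¹ʳ) b⟫ := by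
    rw [inner_sub_left, sub_apply, inner_sub_right, sub_add_sub_cancel]
    rfl
  rw [hsplit]
  calc |⟪a - a', G⁻¹ʳ b⟫ + ⟪a', (G⁻¹ʳ - G'⁻¹ʳ) b⟫|
      ≤ ‖a - a'‖ * ‖G⁻¹ʳ b‖ + ‖a'‖ * ‖(G⁻¹ʳ - G'⁻¹ʳ) b‖ :=
        (abs_add_le _ _).trans
          (add_le_add (abs_real_inner_le_norm _ _) (abs_real_inner_le_norm _ _))
    _ ≤ L * t * (μ⁻¹ * ‖b‖) + M * (D / μ ^ 2 * ‖b‖) := by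
        gcongr
        · exact (norm_nonneg _).trans hLt
        · exact ContinuousLinearMap.le_of_opNorm_le _ hG.norm_inverse_le b
        · exact hM _
        · exact ContinuousLinearMap.le_of_opNorm_le _
            ((hG.norm_inverse_sub_inverse_le hG').trans (by gcongr)) b
    _ = (L * t / μ + M * D / μ ^ 2) * ‖b‖ := by ring

end LocalLeastSquares

section Compactness

variable {X I E : Type*} [TopologicalSpace X] [Fintype I] [NormedAddCommGroup E]
  [InnerProductSpace ℝ E] [FiniteDimensional ℝ E]

theorem exists_pos_mul_norm_sq_le_sum_inner_sq {C : Set X} (hC : IsCompact C) {ψ : X → I → E}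
    (hψ : Continuous ψ) (hspan : ∀ c ∈ C, ∀ v, (∀ i, ⟪ψ c i, v⟫ = 0) → v = 0) :
    ∃ μ > 0, ∀ c ∈ C, ∀ v, μ * ‖v‖ ^ 2 ≤ ∑ i, ⟪ψ c i, v⟫ ^ 2 := by
  obtain ⟨μ, hμ, hle⟩ : ∃ μ > 0, ∀ w ∈ C ×ˢ Metric.sphere (0 : E) 1,
      μ ≤ ∑ i, ⟪ψ w.1 i, w.2⟫ ^ 2 := by
    refine (hC.prod (isCompact_sphere 0 1)).exists_forall_le' (by fun_prop) ?_
    rintro ⟨c, v⟩ ⟨hc, hv⟩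
    refine (sum_nonneg fun i _ => sq_nonneg _).lt_of_ne' fun hzero => ?_
    rw [sum_eq_zero_iff_of_nonneg fun i _ => sq_nonneg _] at hzero
    have hv0 : v = 0 := hspan c hc v fun i =>
      pow_eq_zero_iff two_ne_zero |>.1 (hzero i (mem_univ i))
    simp [hv0] at hv
  refine ⟨μ, hμ, fun c hc v => ?_⟩
  rcases eq_or_ne v 0 with rfl | hv
  · simp
  have hunit : ‖v‖⁻¹ • v ∈ Metric.sphere (0 : E) 1 := by simp [norm_smul, hv]
  have hscaled := hle (c, ‖v‖⁻¹ • v) ⟨hc, hunit⟩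
  simp only [real_inner_smul_right, mul_pow, ← mul_sum, inv_pow] at hscaled
  rwa [← div_eq_inv_mul, le_div_iff₀ (by positivity)] at hscaled

end Compactness

section Selection

variable {I I' J J' : Type*} [Fintype I] [Fintype I'] [Fintype J] [Fintype J']

theorem mul_le_sum_of_forall_selection {S : I → Finset J}
    (hS : Pairwise (Disjoint on S)) {N : ℝ} (hN : 0 < N) (hcard : ∀ i, N ≤ #(S i))
    {Q : J → ℝ} (hQ : ∀ j, 0 ≤ Q j) {c : ℝ}
    (hc : ∀ s : I → J, (∀ i, s i ∈ S i) → c ≤ ∑ i, Q (s i)) : N * c ≤ ∑ j, Q j := by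
  classical
  have hne (i : I) : (S i).Nonempty := card_pos.1 (by exact_mod_cast hN.trans_le (hcard i))
  choose s hs hmin using fun i => (S i).exists_min_image Q (hne i)
  calc N * c ≤ N * ∑ i, Q (s i) := by gcongr; exact hc s hs
    _ = ∑ i, N * Q (s i) := mul_sum ..
    _ ≤ ∑ i, ∑ j ∈ S i, Q j := sum_le_sum fun i _ => calc
        N * Q (s i) ≤ #(S i) * Q (s i) := mul_le_mul_of_nonneg_right (hcard i) (hQ _)
        _ ≤ ∑ j ∈ S i, Q j := by
          rw [← nsmul_eq_mul]
          exact card_nsmul_le_sum _ _ _ (hmin i)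
    _ = ∑ j ∈ univ.biUnion S, Q j := (sum_biUnion fun i _ i' _ h => hS h).symm
    _ ≤ ∑ j, Q j := sum_le_univ_sum_of_nonneg hQ

theorem mul_mul_le_sum_sum_of_forall_selection {S : I → Finset J} {T : I' → Finset J'}
    (hS : Pairwise (Disjoint on S)) (hT : Pairwise (Disjoint on T)) {N : ℝ} (hN : 0 < N)
    (hcardS : ∀ i, N ≤ #(S i)) (hcardT : ∀ i, N ≤ #(T i)) {Q : J → J' → ℝ}
    (hQ : ∀ j k, 0 ≤ Q j k) {c : ℝ}
    (hc : ∀ (s : I → J) (t : I' → J'), (∀ i, s i ∈ S i) → (∀ i, t i ∈ T i) →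
      c ≤ ∑ i, ∑ i', Q (s i) (t i')) :
    N * (N * c) ≤ ∑ j, ∑ k, Q j k := by
  refine mul_le_sum_of_forall_selection hS hN hcardS (fun j => sum_nonneg fun k _ => hQ j k)
    fun s hs => ?_
  rw [sum_comm]
  refine mul_le_sum_of_forall_selection hT hN hcardT (fun k => sum_nonneg fun i _ => hQ _ k)
    fun t ht => ?_
  rw [sum_comm]
  exact hc s t hs ht

end Selection

theorem abs_card_filter_add_half_mem_Icc_sub_le {p : ℕ} {A B : ℝ} (hA : 0 ≤ A) (hAB : A ≤ B)
    (hB : B ≤ p) : |(#{j : Fin p | (j : ℝ) + 1 / 2 ∈ Icc A B} : ℝ) - (B - A)| ≤ 1 := by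
  have hcard : #{j : Fin p | (j : ℝ) + 1 / 2 ∈ Icc A B} =
      #(Finset.Icc ⌈A - 1 / 2⌉ ⌊B - 1 / 2⌋) := by
    refine Finset.card_bij (fun j _ => (j : ℤ)) (fun j hj => ?_) (fun j _ k _ hjk => ?_)
      fun i hi => ?_
    · simp only [mem_filter, Finset.mem_univ, true_and, Set.mem_Icc] at hj
      rw [Finset.mem_Icc, Int.ceil_le, Int.le_floor]
      push_cast
      exact ⟨by linarith, by linarith⟩
    · exact Fin.ext (by exact_mod_cast hjk)
    · rw [Finset.mem_Icc, Int.ceil_le, Int.le_floor] at hi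
      have hlow : (-1 : ℤ) < i := by
        rify
        linarith
      have hup : i < p := by
        rify
        linarith
      lift i to ℕ using by omega
      refine ⟨⟨i, by exact_mod_cast hup⟩, ?_, rfl⟩
      simp only [mem_filter, Finset.mem_univ, true_and, Set.mem_Icc]
      push_cast at hi
      exact ⟨by linarith, by linarith⟩
  have hceil := Int.ceil_lt_add_one (A - 1 / 2)
  have hceil' := Int.le_ceil (A - 1 / 2)
  have hfloor := Int.sub_one_lt_floor (B - 1 / 2)
  have hfloor' := Int.floor_le (B - 1 / 2)
  have hle : ⌈A - 1 / 2⌉ ≤ ⌊B - 1 / 2⌋ + 1 :=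
    (Int.ceil_mono (by linarith)).trans (Int.ceil_le_floor_add_one _)
  have hcount : (#(Finset.Icc ⌈A - 1 / 2⌉ ⌊B - 1 / 2⌋) : ℝ) = ⌊B - 1 / 2⌋ + 1 - ⌈A - 1 / 2⌉ := by
    exact_mod_cast Int.card_Icc_of_le _ _ hle
  rw [hcard, hcount, abs_le]
  exact ⟨by linarith, by linarith⟩

/-- Design points at the quantiles `(j + 1/2) / p` of a distribution on `[0, 1]` whose distribution
function `F` has increments between `a` and `b` times those of the identity. This is what the
design density of Assumption 4 is used for. -/
structure IsQuantileDesign {p : ℕ} (F : ℝ → ℝ) (a b : ℝ) (x : Fin p → ℝ) : Prop where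
  pos : 0 < a
  map_zero : F 0 = 0
  map_one : F 1 = 1
  mul_sub_le {s t : ℝ} (hs : 0 ≤ s) (hst : s ≤ t) (ht : t ≤ 1) : a * (t - s) ≤ F t - F s
  sub_le_mul {s t : ℝ} (hs : 0 ≤ s) (hst : s ≤ t) (ht : t ≤ 1) : F t - F s ≤ b * (t - s)
  mem_Icc (j : Fin p) : x j ∈ Icc (0 : ℝ) 1
  map_apply (j : Fin p) : F (x j) = ((j : ℝ) + 1 / 2) / p

theorem DesignQuantile.isQuantileDesign {p : ℕ} {f : ℝ → ℝ} {fmin fmax : ℝ} {x : Fin p → ℝ}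
    (hx : DesignQuantile f fmin fmax x) :
    IsQuantileDesign (fun t => ∫ s in (0 : ℝ)..t, f s) fmin fmax x := by
  obtain ⟨hfmin, -, ⟨Kf, hlip⟩, hbd, hone, hq⟩ := hx
  have hint {s t : ℝ} (hs : 0 ≤ s) (hst : s ≤ t) (ht : t ≤ 1) :
      IntervalIntegrable f MeasureTheory.volume s t :=
    (hlip.continuousOn.mono (by rw [uIcc_of_le hst]; exact Icc_subset_Icc hs ht)).intervalIntegrable
  have hbd' {s t : ℝ} (hs : 0 ≤ s) (ht : t ≤ 1) (u : ℝ) (hu : u ∈ Icc s t) :=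
    hbd u (Icc_subset_Icc hs ht hu)
  have hsub {s t : ℝ} (hs : 0 ≤ s) (hst : s ≤ t) (ht : t ≤ 1) :
      (∫ u in (0 : ℝ)..t, f u) - ∫ u in (0 : ℝ)..s, f u = ∫ u in s..t, f u :=
    intervalIntegral.integral_interval_sub_left (hint le_rfl (hs.trans hst) ht)
      (hint le_rfl hs (hst.trans ht))
  refine ⟨hfmin, intervalIntegral.integral_same, hone, fun hs hst ht => ?_, fun hs hst ht => ?_,
    fun j => (hq j).1, fun j => ?_⟩
  · have := intervalIntegral.integral_mono_on hst intervalIntegrable_const (hint hs hst ht)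
      fun u hu => (hbd' hs ht u hu).1
    rwa [intervalIntegral.integral_const, smul_eq_mul, mul_comm, ← hsub hs hst ht] at this
  · have := intervalIntegral.integral_mono_on hst (hint hs hst ht) intervalIntegrable_const
      fun u hu => (hbd' hs ht u hu).2
    rwa [intervalIntegral.integral_const, smul_eq_mul, mul_comm, ← hsub hs hst ht] at this
  · rw [(hq j).2]
    ring

namespace IsQuantileDesign

variable {p : ℕ} {F : ℝ → ℝ} {a b : ℝ} {x : Fin p → ℝ}

theorem le (hx : IsQuantileDesign F a b x) : a ≤ b := by
  simpa using (hx.mul_sub_le le_rfl zero_le_one le_rfl).trans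
    (hx.sub_le_mul le_rfl zero_le_one le_rfl)

theorem strictMonoOn (hx : IsQuantileDesign F a b x) : StrictMonoOn F (Icc 0 1) :=
  fun s hs t ht hst => by
    linarith [hx.mul_sub_le hs.1 hst.le ht.2, mul_pos hx.pos (sub_pos.2 hst)]

theorem lt_of_apply_lt (hx : IsQuantileDesign F a b x) {j k : Fin p} (h : x j < x k) :
    j < k := by
  have hp : (0 : ℝ) < p := by exact_mod_cast j.pos
  have hF := hx.strictMonoOn (hx.mem_Icc j) (hx.mem_Icc k) h
  rw [hx.map_apply, hx.map_apply, div_lt_div_iff_of_pos_right hp] at hF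
  exact_mod_cast (add_lt_add_iff_right _).1 hF

theorem apply_mem_Icc_iff (hx : IsQuantileDesign F a b x) {α β : ℝ} (hα : α ∈ Icc (0 : ℝ) 1)
    (hβ : β ∈ Icc (0 : ℝ) 1) (j : Fin p) :
    x j ∈ Icc α β ↔ (j : ℝ) + 1 / 2 ∈ Icc (p * F α) (p * F β) := by
  have hp : (0 : ℝ) < p := by exact_mod_cast j.pos
  rw [Set.mem_Icc, Set.mem_Icc, ← hx.strictMonoOn.le_iff_le hα (hx.mem_Icc j),
    ← hx.strictMonoOn.le_iff_le (hx.mem_Icc j) hβ, hx.map_apply, le_div_iff₀' hp, div_le_iff₀' hp]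

theorem abs_card_filter_mem_Icc_sub_le (hx : IsQuantileDesign F a b x) {α β : ℝ} (hα : 0 ≤ α)
    (hαβ : α ≤ β) (hβ : β ≤ 1) :
    |(#{j | x j ∈ Icc α β} : ℝ) - p * (F β - F α)| ≤ 1 := by
  have hmono := hx.strictMonoOn.monotoneOn
  have hα' : α ∈ Icc (0 : ℝ) 1 := ⟨hα, hαβ.trans hβ⟩
  have hβ' : β ∈ Icc (0 : ℝ) 1 := ⟨hα.trans hαβ, hβ⟩
  have hFα : 0 ≤ F α := hx.map_zero.symm.trans_le
    (hmono (left_mem_Icc.2 zero_le_one) hα' hα)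
  have hFβ : F β ≤ 1 := (hmono hβ' (right_mem_Icc.2 zero_le_one) hβ).trans_eq hx.map_one
  simp only [hx.apply_mem_Icc_iff hα' hβ', mul_sub]
  refine abs_card_filter_add_half_mem_Icc_sub_le (by positivity) ?_ ?_
  · gcongr
    exact hmono hα' hβ' hαβ
  · exact mul_le_of_le_one_right p.cast_nonneg hFβ

theorem mul_sub_one_le_card (hx : IsQuantileDesign F a b x) {α β : ℝ} (hα : 0 ≤ α) (hαβ : α ≤ β)
    (hβ : β ≤ 1) : p * (a * (β - α)) - 1 ≤ #{j | x j ∈ Icc α β} := by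
  have hF : p * (a * (β - α)) ≤ p * (F β - F α) := by
    gcongr
    exact hx.mul_sub_le hα hαβ hβ
  linarith [(abs_le.1 (hx.abs_card_filter_mem_Icc_sub_le hα hαβ hβ)).1]

theorem card_le_mul_add_one (hx : IsQuantileDesign F a b x) {α β : ℝ} (hα : 0 ≤ α) (hαβ : α ≤ β)
    (hβ : β ≤ 1) : #{j | x j ∈ Icc α β} ≤ p * (b * (β - α)) + 1 := by
  have hF : p * (F β - F α) ≤ p * (b * (β - α)) := by
    gcongr
    exact hx.sub_le_mul hα hαβ hβ
  linarith [(abs_le.1 (hx.abs_card_filter_mem_Icc_sub_le hα hαβ hβ)).2]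

theorem card_filter_abs_sub_le (hx : IsQuantileDesign F a b x) {s h : ℝ}
    (hs : s ∈ Icc (0 : ℝ) 1) (hh : 0 ≤ h) :
    #{j | |x j - s| ≤ h} ≤ 2 * b * (p * h) + 1 := by
  have hb : 0 ≤ b := hx.pos.le.trans hx.le
  have hαβ : max 0 (s - h) ≤ min 1 (s + h) :=
    le_min (max_le zero_le_one (by linarith [hs.2])) (max_le (by linarith [hs.1]) (by linarith))
  have hsub (j : Fin p) (hj : |x j - s| ≤ h) : x j ∈ Icc (max 0 (s - h)) (min 1 (s + h)) := by
    rw [abs_le] at hj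
    exact ⟨max_le (hx.mem_Icc j).1 (by linarith), le_min (hx.mem_Icc j).2 (by linarith)⟩
  calc (#{j | |x j - s| ≤ h} : ℝ) ≤ #{j | x j ∈ Icc (max 0 (s - h)) (min 1 (s + h))} := by
        exact_mod_cast Finset.card_le_card (monotone_filter_right _ fun j _ => hsub j)
    _ ≤ p * (b * (min 1 (s + h) - max 0 (s - h))) + 1 :=
        hx.card_le_mul_add_one (le_max_left _ _) hαβ (min_le_left _ _)
    _ ≤ p * (b * ((s + h) - (s - h))) + 1 := by
        gcongr
        exacts [min_le_right _ _, le_max_right _ _]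
    _ = 2 * b * (p * h) + 1 := by ring

end IsQuantileDesign

/-- The design points in the `i`-th of the intervals of length `ℓ`, with gaps of length `ℓ`, that
are laid out from `α` to the right. -/
noncomputable def designSlot {p : ℕ} (x : Fin p → ℝ) (α ℓ : ℝ) (i : ℕ) : Finset (Fin p) :=
  {j | x j ∈ Icc (α + 2 * i * ℓ) (α + (2 * i + 1) * ℓ)}

section DesignSlot

variable {p : ℕ} {x : Fin p → ℝ} {α ℓ : ℝ}

theorem mem_designSlot {i : ℕ} {j : Fin p} :
    j ∈ designSlot x α ℓ i ↔ x j ∈ Icc (α + 2 * i * ℓ) (α + (2 * i + 1) * ℓ) := by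
  simp [designSlot]

theorem mem_Ico_of_mem_designSlot (hℓ : 0 < ℓ) {n i : ℕ} (hi : i < n) {j : Fin p}
    (hj : j ∈ designSlot x α ℓ i) : x j ∈ Ico α (α + 2 * n * ℓ) := by
  have hin : (i : ℝ) + 1 ≤ n := by exact_mod_cast hi
  rw [mem_designSlot] at hj
  exact ⟨(le_add_of_nonneg_right (by positivity)).trans hj.1, hj.2.trans_lt (by nlinarith)⟩

theorem le_abs_sub_of_mem_designSlot (hℓ : 0 ≤ ℓ) {i i' : ℕ} (hi : i ≠ i') {j k : Fin p}
    (hj : j ∈ designSlot x α ℓ i) (hk : k ∈ designSlot x α ℓ i') : ℓ ≤ |x j - x k| := by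
  wlog hlt : i < i' generalizing i i' j k
  · rw [abs_sub_comm]
    exact this hi.symm hk hj (hi.lt_or_gt.resolve_left hlt)
  have hii' : (i : ℝ) + 1 ≤ i' := by exact_mod_cast hlt
  rw [mem_designSlot] at hj hk
  rw [abs_sub_comm]
  refine le_trans ?_ (le_abs_self _)
  nlinarith [hj.2, hk.1]

theorem pairwise_disjoint_designSlot (hℓ : 0 < ℓ) : Pairwise (Disjoint on designSlot x α ℓ) :=
  fun i i' hi => disjoint_left.2 fun j hj hj' => by
    have := le_abs_sub_of_mem_designSlot hℓ.le hi hj hj'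
    rw [sub_self, abs_zero] at this
    exact hℓ.not_ge this

theorem IsQuantileDesign.mul_sub_one_le_card_designSlot {F : ℝ → ℝ} {a b : ℝ}
    (hx : IsQuantileDesign F a b x) (hα : 0 ≤ α) (hℓ : 0 ≤ ℓ) {n i : ℕ} (hi : i < n)
    (hn : α + 2 * n * ℓ ≤ 1) : p * (a * ℓ) - 1 ≤ #(designSlot x α ℓ i) := by
  have hin : (i : ℝ) + 1 ≤ n := by exact_mod_cast hi
  calc p * (a * ℓ) - 1 = p * (a * (α + (2 * i + 1) * ℓ - (α + 2 * i * ℓ))) - 1 := by ring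
    _ ≤ #(designSlot x α ℓ i) :=
        hx.mul_sub_one_le_card (by positivity) (by linarith) (by nlinarith)

end DesignSlot

theorem exists_adjacent_intervals_of_mem_upperT {z : ℝ × ℝ} (hz : z ∈ upperT) {ρ : ℝ}
    (hρ : 0 ≤ ρ) (hρ' : 3 * ρ ≤ 1 / 4) :
    ∃ α β : ℝ, 0 ≤ α ∧ α + ρ ≤ β ∧ β + ρ ≤ 1 ∧
      Icc α (α + ρ) ⊆ Icc (z.1 - 3 * ρ) (z.1 + 3 * ρ) ∧
      Icc β (β + ρ) ⊆ Icc (z.2 - 3 * ρ) (z.2 + 3 * ρ) := by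
  obtain ⟨⟨h₁, -⟩, ⟨-, h₂⟩, h₁₂⟩ := hz
  rcases le_or_gt z.2 (3 / 4) with hz₂ | hz₂
  · exact ⟨z.1, z.2 + 2 * ρ, h₁, by linarith, by linarith,
      Icc_subset_Icc (by linarith) (by linarith), Icc_subset_Icc (by linarith) (by linarith)⟩
  rcases le_or_gt (1 / 4) z.1 with hz₁ | hz₁
  · exact ⟨z.1 - 3 * ρ, z.2 - ρ, by linarith, by linarith, by linarith,
      Icc_subset_Icc (by linarith) (by linarith), Icc_subset_Icc (by linarith) (by linarith)⟩
  · exact ⟨z.1, z.2 - ρ, h₁, by linarith, by linarith,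
      Icc_subset_Icc (by linarith) (by linarith), Icc_subset_Icc (by linarith) (by linarith)⟩

/-- The index pairs `j < k` over which the restricted estimator is fitted. -/
def orderedPairs (p : ℕ) : Finset (Fin p × Fin p) :=
  {e | e.1 < e.2}

theorem pairSum_eq_sum_orderedPairs {p : ℕ} (g : Fin p → Fin p → ℝ) :
    pairSum g = ∑ e ∈ orderedPairs p, g e.1 e.2 := by
  rw [pairSum, orderedPairs, sum_filter, Fintype.sum_prod_type]

/-- The position of the design pair `(x_j, x_k)` relative to `z` in units of the bandwidth `h`. -/
noncomputable def scaledPair {p : ℕ} (x : Fin p → ℝ) (h : ℝ) (z : ℝ × ℝ) (e : Fin p × Fin p) :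
    ℝ × ℝ :=
  ((x e.1 - z.1) / h, (x e.2 - z.2) / h)

section ScaledPair

variable {p : ℕ} {x : Fin p → ℝ} {h : ℝ}

theorem norm_scaledPair (hh : 0 < h) (z : ℝ × ℝ) (e : Fin p × Fin p) :
    ‖scaledPair x h z e‖ = max |x e.1 - z.1| |x e.2 - z.2| / h := by
  rw [scaledPair, Prod.norm_def, Real.norm_eq_abs, Real.norm_eq_abs, abs_div, abs_div,
    abs_of_pos hh, max_div_div_right hh.le]

theorem norm_scaledPair_sub (hh : 0 < h) (z z' : ℝ × ℝ) (e : Fin p × Fin p) :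
    ‖scaledPair x h z e - scaledPair x h z' e‖ = max |z.1 - z'.1| |z.2 - z'.2| / h := by
  rw [scaledPair, scaledPair, Prod.mk_sub_mk, ← sub_div, ← sub_div, sub_sub_sub_cancel_left,
    sub_sub_sub_cancel_left, Prod.norm_def, Real.norm_eq_abs, Real.norm_eq_abs, abs_div, abs_div,
    abs_of_pos hh, max_div_div_right hh.le, abs_sub_comm, abs_sub_comm z'.2]

theorem IsQuantileDesign.card_filter_norm_scaledPair_le {F : ℝ → ℝ} {a b : ℝ}
    (hx : IsQuantileDesign F a b x) (hh : 0 < h) {z : ℝ × ℝ} (hz : z ∈ upperT) :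
    #{e ∈ orderedPairs p | ‖scaledPair x h z e‖ ≤ 1} ≤ (2 * b * (p * h) + 1) ^ 2 := by
  have hsub : {e ∈ orderedPairs p | ‖scaledPair x h z e‖ ≤ 1} ⊆
      ({j | |x j - z.1| ≤ h} : Finset (Fin p)) ×ˢ ({k | |x k - z.2| ≤ h} : Finset (Fin p)) := by
    intro e he
    simpa [norm_scaledPair hh, div_le_one hh] using (mem_filter.1 he).2
  calc (#{e ∈ orderedPairs p | ‖scaledPair x h z e‖ ≤ 1} : ℝ)
      ≤ #{j | |x j - z.1| ≤ h} * #{k | |x k - z.2| ≤ h} := by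
        rw [← Nat.cast_mul, ← card_product]
        exact_mod_cast Finset.card_le_card hsub
    _ ≤ (2 * b * (p * h) + 1) * (2 * b * (p * h) + 1) :=
        mul_le_mul (hx.card_filter_abs_sub_le hz.1 hh.le) (hx.card_filter_abs_sub_le hz.2.1 hh.le)
          (Nat.cast_nonneg _) ((Nat.cast_nonneg _).trans (hx.card_filter_abs_sub_le hz.1 hh.le))
    _ = (2 * b * (p * h) + 1) ^ 2 := (sq _).symm

end ScaledPair

section Monomials

theorem eq_zero_of_forall_sum_sum_mul_pow_eq_zero {R : Type*} [CommRing R] [IsDomain R] {n : ℕ}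
    {t s : Fin n → R} (ht : Function.Injective t) (hs : Function.Injective s)
    {c : Fin n → Fin n → R} (h : ∀ a b, ∑ i, ∑ j, c i j * (t a ^ (i : ℕ) * s b ^ (j : ℕ)) = 0) :
    c = 0 := by
  have hrow (b : Fin n) : (fun i => ∑ j, c i j * s b ^ (j : ℕ)) = 0 := by
    refine Matrix.eq_zero_of_forall_index_sum_pow_mul_eq_zero ht fun a => ?_
    rw [← h a b]
    refine sum_congr rfl fun i _ => ?_
    rw [mul_sum]
    exact sum_congr rfl fun j _ => by ring
  ext1 i
  refine Matrix.eq_zero_of_forall_index_sum_pow_mul_eq_zero hs fun b => ?_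
  refine Eq.trans ?_ (congrFun (hrow b) i)
  exact sum_congr rfl fun j _ => mul_comm _ _

variable {m : ℕ}

theorem contDiff_Umon {n : WithTop ℕ∞} (q : MIdx m) : ContDiff ℝ n (Umon m q) := by
  unfold Umon
  fun_prop

theorem eq_zero_of_forall_sum_mul_Umon_eq_zero {t s : Fin (m + 1) → ℝ} (ht : Function.Injective t)
    (hs : Function.Injective s) {v : MIdx m → ℝ} (h : ∀ a b, ∑ q, v q * Umon m q (t a, s b) = 0) :
    v = 0 := by
  let c : Fin (m + 1) → Fin (m + 1) → ℝ := fun i j =>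
    if hq : (i : ℕ) + (j : ℕ) ≤ m then
      v ⟨(i, j), hq⟩ / (((i : ℕ).factorial : ℝ) * ((j : ℕ).factorial : ℝ)) else 0
  have hcq (q : MIdx m) :
      c q.1.1 q.1.2 = v q / (((q.1.1 : ℕ).factorial : ℝ) * ((q.1.2 : ℕ).factorial : ℝ)) :=
    dif_pos q.2
  have hc : c = 0 := by
    refine eq_zero_of_forall_sum_sum_mul_pow_eq_zero ht hs fun a b => ?_
    rw [← h a b, ← Fintype.sum_prod_type' (f := fun i j => c i j * (t a ^ (i : ℕ) * s b ^ (j : ℕ)))]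
    symm
    refine sum_of_injOn (fun q : MIdx m => q.1) (Subtype.val_injective.injOn)
      (fun q _ => mem_coe.2 (Finset.mem_univ _)) (fun e _ he => ?_) (fun q _ => ?_)
    · have hdeg : ¬ (e.1 : ℕ) + (e.2 : ℕ) ≤ m := fun hle =>
        he ⟨⟨e, hle⟩, mem_coe.2 (Finset.mem_univ _), rfl⟩
      rw [show c e.1 e.2 = 0 from dif_neg hdeg, zero_mul]
    · rw [hcq, Umon]
      ring
  ext q
  have hq := hcq q
  rw [hc, Pi.zero_apply, Pi.zero_apply, eq_comm, div_eq_zero_iff] at hq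
  exact hq.resolve_right (by positivity)

/-- The vector `U_m(u)` of the paper as an element of a Euclidean space. -/
noncomputable def monomialVector (m : ℕ) (u : ℝ × ℝ) : EuclideanSpace ℝ (MIdx m) :=
  WithLp.toLp 2 fun q => Umon m q u

theorem inner_monomialVector (u : ℝ × ℝ) (v : EuclideanSpace ℝ (MIdx m)) :
    ⟪monomialVector m u, v⟫ = ∑ q, v q * Umon m q u := by
  simp [monomialVector, PiLp.inner_apply]

theorem contDiff_monomialVector {n : WithTop ℕ∞} : ContDiff ℝ n (monomialVector m) :=
  contDiff_piLp' 2 fun q => contDiff_Umon q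

/-- Node vectors in `[-1, 1]` with entries at pairwise distance at least `η`; a compact set on which
interpolation problems are uniformly well posed. -/
def separatedNodes (n : ℕ) (η : ℝ) : Set (Fin n → ℝ) :=
  {t | (∀ i, |t i| ≤ 1) ∧ ∀ i j, i ≠ j → η ≤ |t i - t j|}

theorem isCompact_separatedNodes (n : ℕ) (η : ℝ) : IsCompact (separatedNodes n η) := by
  refine Metric.isCompact_of_isClosed_isBounded ?_ ?_
  · simp only [separatedNodes, Set.ofPred_and, Set.ofPred_forall]
    refine IsClosed.inter (isClosed_iInter fun i => isClosed_le (by fun_prop) (by fun_prop)) ?_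
    exact isClosed_iInter fun i => isClosed_iInter fun j => isClosed_iInter fun _ =>
      isClosed_le (by fun_prop) (by fun_prop)
  · refine (Metric.isBounded_closedBall (x := (0 : Fin n → ℝ)) (r := 1)).subset fun t ht => ?_
    rw [mem_closedBall_zero_iff, pi_norm_le_iff_of_nonneg zero_le_one]
    exact ht.1

theorem injective_of_mem_separatedNodes {n : ℕ} {η : ℝ} (hη : 0 < η) {t : Fin n → ℝ}
    (ht : t ∈ separatedNodes n η) : Function.Injective t := fun i j hij => by
  by_contra hne
  exact hη.not_ge (by simpa [hij] using ht.2 i j hne)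

theorem exists_pos_mul_norm_sq_le_sum_inner_monomialVector_sq (m : ℕ) {η : ℝ} (hη : 0 < η) :
    ∃ μ > 0, ∀ t ∈ separatedNodes (m + 1) η, ∀ s ∈ separatedNodes (m + 1) η, ∀ v,
      μ * ‖v‖ ^ 2 ≤ ∑ i, ∑ j, ⟪monomialVector m (t i, s j), v⟫ ^ 2 := by
  obtain ⟨μ, hμ, hle⟩ := exists_pos_mul_norm_sq_le_sum_inner_sq
    ((isCompact_separatedNodes (m + 1) η).prod (isCompact_separatedNodes (m + 1) η))
    (ψ := fun c (e : Fin (m + 1) × Fin (m + 1)) => monomialVector m (c.1 e.1, c.2 e.2))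
    (continuous_pi fun e => contDiff_monomialVector (n := 0).continuous.comp (by fun_prop))
    fun c hc v hv => by
      refine WithLp.ofLp_injective 2 (eq_zero_of_forall_sum_mul_Umon_eq_zero
        (injective_of_mem_separatedNodes hη hc.1) (injective_of_mem_separatedNodes hη hc.2)
        fun i j => ?_)
      rw [← inner_monomialVector]
      exact hv (i, j)
  refine ⟨μ, hμ, fun t ht s hs v => (hle (t, s) ⟨ht, hs⟩ v).trans_eq ?_⟩
  rw [Fintype.sum_prod_type]

end Monomials

section Coercivity

variable {p n : ℕ} {F : ℝ → ℝ} {a b h ℓ : ℝ} {x : Fin p → ℝ}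

theorem div_mem_separatedNodes {α y : ℝ} (hh : 0 < h) (hℓ : 0 ≤ ℓ) {s : Fin n → Fin p}
    (hs : ∀ i : Fin n, s i ∈ designSlot x α ℓ i) (hy : ∀ i, |x (s i) - y| ≤ h) :
    (fun i => (x (s i) - y) / h) ∈ separatedNodes n (ℓ / h) := by
  refine ⟨fun i => ?_, fun i j hij => ?_⟩
  · rw [abs_div, abs_of_pos hh, div_le_one hh]
    exact hy i
  · rw [← sub_div, sub_sub_sub_cancel_right, abs_div, abs_of_pos hh]
    gcongr
    exact le_abs_sub_of_mem_designSlot hℓ (Fin.val_injective.ne hij) (hs i) (hs j)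

theorem IsQuantileDesign.exists_designSlots (hx : IsQuantileDesign F a b x) {z : ℝ × ℝ}
    (hz : z ∈ upperT) (hℓ : 0 < ℓ) (hnℓ : 6 * n * ℓ ≤ 1 / 4) :
    ∃ α β : ℝ,
      (∀ i : Fin n, p * (a * ℓ) - 1 ≤ #(designSlot x α ℓ i)) ∧
      (∀ i : Fin n, p * (a * ℓ) - 1 ≤ #(designSlot x β ℓ i)) ∧
      ∀ i i' : Fin n, ∀ j ∈ designSlot x α ℓ i, ∀ k ∈ designSlot x β ℓ i',
        j < k ∧ |x j - z.1| ≤ 6 * n * ℓ ∧ |x k - z.2| ≤ 6 * n * ℓ := by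
  obtain ⟨α, β, hα, hαβ, hβ, hαz, hβz⟩ := exists_adjacent_intervals_of_mem_upperT hz
    (ρ := 2 * n * ℓ) (by positivity) (by linarith)
  have hρ : 0 ≤ 2 * n * ℓ := by positivity
  refine ⟨α, β, fun i => hx.mul_sub_one_le_card_designSlot hα hℓ.le i.2 (by linarith),
    fun i => hx.mul_sub_one_le_card_designSlot (by linarith) hℓ.le i.2 hβ,
    fun i i' j hj k hk => ?_⟩
  have hxj := mem_Ico_of_mem_designSlot hℓ i.2 hj
  have hxk := mem_Ico_of_mem_designSlot hℓ i'.2 hk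
  have hjz := hαz (Ico_subset_Icc_self hxj)
  have hkz := hβz (Ico_subset_Icc_self hxk)
  exact ⟨hx.lt_of_apply_lt ((hxj.2.trans_le hαβ).trans_le hxk.1),
    abs_le.2 ⟨by linarith [hjz.1], by linarith [hjz.2]⟩,
    abs_le.2 ⟨by linarith [hkz.1], by linarith [hkz.2]⟩⟩

variable {E : Type*} [NormedAddCommGroup E] [InnerProductSpace ℝ E]

theorem IsQuantileDesign.isCoerciveWith_localGram (hx : IsQuantileDesign F a b x)
    {K : ℝ × ℝ → ℝ} {φ : ℝ × ℝ → E} {κ μ η N : ℝ} (hK : ∀ u, 0 ≤ K u) (hκ : 0 < κ)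
    (hKκ : ∀ u, ‖u‖ ≤ 6 * n * η → κ ≤ K u) (hμ : 0 < μ)
    (hφ : ∀ t ∈ separatedNodes n η, ∀ s ∈ separatedNodes n η, ∀ v,
      μ * ‖v‖ ^ 2 ≤ ∑ i, ∑ j, ⟪φ (t i, s j), v⟫ ^ 2)
    (hη : 0 < η) (hnη : 6 * n * η ≤ 1) (hh : 0 < h) (hh' : h ≤ 1 / 4) (hN : 0 < N)
    (hNp : N ≤ p * (a * (h * η)) - 1) {z : ℝ × ℝ} (hz : z ∈ upperT) :
    IsCoerciveWith (localGram K φ (orderedPairs p) (scaledPair x h z)) (κ * μ * N ^ 2) := by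
  refine ⟨by positivity, fun v => ?_⟩
  have hℓ : 0 < h * η := mul_pos hh hη
  have hbox : 6 * n * (h * η) = h * (6 * n * η) := by ring
  have hbox_le : h * (6 * n * η) ≤ h := mul_le_of_le_one_right hh.le hnη
  obtain ⟨α, β, hcardα, hcardβ, hslot⟩ := hx.exists_designSlots hz hℓ (n := n) (by linarith)
  rw [hbox] at hslot
  have hdisj (α : ℝ) := (pairwise_disjoint_designSlot hℓ (x := x) (α := α)).comp_of_injective
    (Fin.val_injective (n := n))
  set G : Fin p → Fin p → ℝ := fun j k =>
    K (scaledPair x h z (j, k)) * ⟪φ (scaledPair x h z (j, k)), v⟫ ^ 2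
  calc κ * μ * N ^ 2 * ‖v‖ ^ 2 = N * (N * (κ * (μ * ‖v‖ ^ 2))) := by ring
    _ ≤ pairSum G := by
        refine mul_mul_le_sum_sum_of_forall_selection (hdisj α) (hdisj β) hN
          (fun i => hNp.trans (hcardα i)) (fun i => hNp.trans (hcardβ i))
          (fun j k => ?_) fun s t hs ht => ?_
        · split_ifs
          exacts [mul_nonneg (hK _) (sq_nonneg _), le_rfl]
        have hst (i i') := hslot i i' _ (hs i) _ (ht i')
        have hs' := div_mem_separatedNodes hh hℓ.le hs
          (fun i => (hst i i).2.1.trans hbox_le)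
        have ht' := div_mem_separatedNodes hh hℓ.le ht
          (fun i => (hst i i).2.2.trans hbox_le)
        rw [mul_div_cancel_left₀ _ hh.ne'] at hs' ht'
        refine (mul_le_mul_of_nonneg_left (hφ _ hs' _ ht' v) hκ.le).trans ?_
        simp only [mul_sum]
        refine sum_le_sum fun i _ => sum_le_sum fun i' _ => ?_
        rw [if_pos (hst i i').1]
        refine mul_le_mul_of_nonneg_right (hKκ _ ?_) (sq_nonneg _)
        rw [norm_scaledPair hh, div_le_iff₀' hh]
        exact max_le (hst i i').2.1 (hst i i').2.2
    _ = ⟪localGram K φ (orderedPairs p) (scaledPair x h z) v, v⟫ := by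
        rw [localGram, inner_gramOp, pairSum_eq_sum_orderedPairs]
        simp only [G, sq, Function.comp_apply]

end Coercivity

section LocalPolynomial

/-- The index of the constant monomial. -/
def MIdx.zero (m : ℕ) : MIdx m := ⟨(0, 0), by simp⟩

theorem Umon_zero (m : ℕ) (u : ℝ × ℝ) : Umon m (MIdx.zero m) u = 1 := by
  simp [Umon, MIdx.zero]

/-- The weight `w_{j,k}(z; h)` of the observation `z_{j,k}` in the restricted local polynomial
estimator at `z`, the fitted coefficient of the constant monomial. It is meaningful for `j < k`
only. -/
noncomputable def lpWeight {p : ℕ} (m : ℕ) (K : ℝ × ℝ → ℝ) (x : Fin p → ℝ) (h : ℝ) (z : ℝ × ℝ)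
    (j k : Fin p) : ℝ :=
  localWeight K (monomialVector m) (EuclideanSpace.single (MIdx.zero m) 1) (orderedPairs p)
    (scaledPair x h z) (j, k)

/-- The weights `w` represent the restricted local polynomial estimator of order `m`, which is
unique, and have the properties (W1) to (W4), with `C₁` and `C₂` the constants of (W3) and (W4). -/
structure IsLocalPolynomialWeight {p : ℕ} (m : ℕ) (K : ℝ × ℝ → ℝ) (x : Fin p → ℝ) (h C₁ C₂ : ℝ)
    (w : ℝ × ℝ → Fin p → Fin p → ℝ) : Prop where
  minimizer : ∀ z ∈ upperT, ∀ data : Fin p → Fin p → ℝ,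
    (∃! θ : MIdx m → ℝ, ∀ θ', lpLoss m K x h z data θ ≤ lpLoss m K x h z data θ') ∧
      ∀ θ : MIdx m → ℝ, (∀ θ', lpLoss m K x h z data θ ≤ lpLoss m K x h z data θ') →
        θ (MIdx.zero m) = pairSum fun j k => w z j k * data j k
  reproduces : ∀ z ∈ upperT, pairSum (w z) = 1 ∧
    ∀ r₁ r₂ : ℕ, 0 < r₁ + r₂ → r₁ + r₂ ≤ m →
      pairSum (fun j k => (x j - z.1) ^ r₁ * (x k - z.2) ^ r₂ * w z j k) = 0
  eq_zero : ∀ z ∈ upperT, ∀ j k, h < max |x j - z.1| |x k - z.2| → w z j k = 0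
  abs_le : ∀ z ∈ upperT, ∀ j k, |w z j k| ≤ C₁ / (p * h) ^ 2
  abs_sub_le : ∀ z ∈ upperT, ∀ z' ∈ upperT, ∀ j k,
    |w z j k - w z' j k| ≤ C₂ / (p * h) ^ 2 * min (max |z.1 - z'.1| |z.2 - z'.2| / h) 1

variable {p m : ℕ} {K : ℝ × ℝ → ℝ} {x : Fin p → ℝ} {h μ : ℝ} {z z' : ℝ × ℝ}

theorem lpLoss_eq_weightedLoss (data : Fin p → Fin p → ℝ) (θ : MIdx m → ℝ) :
    lpLoss m K x h z data θ = weightedLoss (orderedPairs p) (K ∘ scaledPair x h z)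
      (monomialVector m ∘ scaledPair x h z) (fun e => data e.1 e.2) (WithLp.toLp 2 θ) := by
  simp only [lpLoss, pairSum_eq_sum_orderedPairs, weightedLoss, Function.comp_apply,
    inner_monomialVector, scaledPair]

theorem forall_lpLoss_le_iff
    (hG : IsCoerciveWith (localGram K (monomialVector m) (orderedPairs p) (scaledPair x h z)) μ)
    {data : Fin p → Fin p → ℝ} {θ : MIdx m → ℝ} :
    (∀ θ', lpLoss m K x h z data θ ≤ lpLoss m K x h z data θ') ↔
      WithLp.toLp 2 θ = lsEstimator (orderedPairs p) (K ∘ scaledPair x h z)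
        (monomialVector m ∘ scaledPair x h z) fun e => data e.1 e.2 := by
  simp only [lpLoss_eq_weightedLoss]
  exact ((WithLp.toLp_surjective 2).forall (p := fun θ' => _ ≤ weightedLoss _ _ _ _ θ')).symm.trans
    (forall_weightedLoss_le_iff hG)

theorem existsUnique_lpLoss_minimizer
    (hG : IsCoerciveWith (localGram K (monomialVector m) (orderedPairs p) (scaledPair x h z)) μ)
    (data : Fin p → Fin p → ℝ) :
    ∃! θ : MIdx m → ℝ, ∀ θ', lpLoss m K x h z data θ ≤ lpLoss m K x h z data θ' := by
  simp only [forall_lpLoss_le_iff hG]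
  exact (WithLp.toLp_bijective 2).existsUnique _

theorem lpLoss_minimizer_apply_zero
    (hG : IsCoerciveWith (localGram K (monomialVector m) (orderedPairs p) (scaledPair x h z)) μ)
    {data : Fin p → Fin p → ℝ} {θ : MIdx m → ℝ}
    (hθ : ∀ θ', lpLoss m K x h z data θ ≤ lpLoss m K x h z data θ') :
    θ (MIdx.zero m) = pairSum fun j k => lpWeight m K x h z j k * data j k := by
  calc θ (MIdx.zero m)
      = ⟪EuclideanSpace.single (MIdx.zero m) (1 : ℝ), WithLp.toLp 2 θ⟫ := by
        simp [EuclideanSpace.inner_single_left]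
    _ = pairSum fun j k => lpWeight m K x h z j k * data j k := by
        rw [(forall_lpLoss_le_iff hG).1 hθ, inner_lsEstimator hG, pairSum_eq_sum_orderedPairs]
        rfl

theorem pairSum_lpWeight_mul_Umon
    (hG : IsCoerciveWith (localGram K (monomialVector m) (orderedPairs p) (scaledPair x h z)) μ)
    (q : MIdx m) :
    pairSum (fun j k => lpWeight m K x h z j k * Umon m q (scaledPair x h z (j, k))) =
      if q = MIdx.zero m then 1 else 0 := by
  have hrep := sum_lsWeight_mul_inner hG (EuclideanSpace.single (MIdx.zero m) 1)
    (EuclideanSpace.single q 1)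
  simpa [pairSum_eq_sum_orderedPairs, inner_monomialVector, EuclideanSpace.inner_single_left,
    Pi.single_apply, eq_comm] using! hrep

theorem pow_mul_pow_eq_mul_Umon (hh : h ≠ 0) (q : MIdx m) (j k : Fin p) :
    (x j - z.1) ^ (q.1.1 : ℕ) * (x k - z.2) ^ (q.1.2 : ℕ) =
      h ^ (q.1.1 + q.1.2 : ℕ) * ((q.1.1 : ℕ).factorial * (q.1.2 : ℕ).factorial) *
        Umon m q (scaledPair x h z (j, k)) := by
  simp only [Umon, scaledPair, div_pow, pow_add]
  field_simp

theorem lpWeight_reproduces (hh : h ≠ 0)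
    (hG : IsCoerciveWith (localGram K (monomialVector m) (orderedPairs p) (scaledPair x h z)) μ) :
    pairSum (lpWeight m K x h z) = 1 ∧
      ∀ r₁ r₂ : ℕ, 0 < r₁ + r₂ → r₁ + r₂ ≤ m →
        pairSum (fun j k => (x j - z.1) ^ r₁ * (x k - z.2) ^ r₂ * lpWeight m K x h z j k) = 0 := by
  refine ⟨?_, fun r₁ r₂ hpos hm => ?_⟩
  · have hrep := pairSum_lpWeight_mul_Umon hG (MIdx.zero m)
    simpa only [Umon_zero, mul_one, if_true] using! hrep
  let q : MIdx m := ⟨(⟨r₁, by omega⟩, ⟨r₂, by omega⟩), hm⟩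
  have hq : q ≠ MIdx.zero m := by
    rintro hq
    have h₁ : r₁ = 0 := congrArg (fun q : MIdx m => (q.1.1 : ℕ)) hq
    have h₂ : r₂ = 0 := congrArg (fun q : MIdx m => (q.1.2 : ℕ)) hq
    omega
  have hrep := pairSum_lpWeight_mul_Umon hG q
  rw [if_neg hq, pairSum_eq_sum_orderedPairs] at hrep
  rw [pairSum_eq_sum_orderedPairs, ← mul_zero (h ^ (r₁ + r₂) * (r₁.factorial * r₂.factorial : ℝ)),
    ← hrep, mul_sum]
  refine sum_congr rfl fun e _ => ?_
  rw [pow_mul_pow_eq_mul_Umon hh q e.1 e.2]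
  ring

theorem lpWeight_eq_zero (hh : 0 < h) (hK : ∀ u, 1 < ‖u‖ → K u = 0) {j k : Fin p}
    (hjk : h < max |x j - z.1| |x k - z.2|) : lpWeight m K x h z j k = 0 := by
  have hK' : K (scaledPair x h z (j, k)) = 0 :=
    hK _ (by rwa [norm_scaledPair hh, one_lt_div hh])
  simp [lpWeight, localWeight, lsWeight, hK']

theorem exists_isCoerciveWith_localGram_monomialVector (m : ℕ) {K : ℝ × ℝ → ℝ} {a : ℝ}
    (hK : ∀ u, 0 ≤ K u) (hK0 : 0 < K 0) (hcont : ContinuousAt K 0) (ha : 0 < a) :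
    ∃ c > 0, ∃ μ > 0, ∀ {p : ℕ} {x : Fin p → ℝ} {F : ℝ → ℝ} {b : ℝ},
      IsQuantileDesign F a b x → ∀ {h : ℝ}, 0 < h → c < p * h → h ≤ 1 / 4 → ∀ z ∈ upperT,
        IsCoerciveWith (localGram K (monomialVector m) (orderedPairs p) (scaledPair x h z))
          (μ * (p * h) ^ 2) := by
  obtain ⟨r, hr, hKr⟩ : ∃ r > 0, ∀ u, ‖u‖ ≤ r → K 0 / 2 ≤ K u := by
    simpa [Metric.nhds_basis_closedBall.eventually_iff] using
      hcont.eventually (Ici_mem_nhds (half_lt_self hK0))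
  set ρ := min r 1
  set η := ρ / (6 * (m + 1 : ℕ))
  have hη : 0 < η := div_pos (lt_min hr one_pos) (by positivity)
  have hρη : 6 * (m + 1 : ℕ) * η = ρ := mul_div_cancel₀ _ (by positivity)
  obtain ⟨μ, hμ, hle⟩ := exists_pos_mul_norm_sq_le_sum_inner_monomialVector_sq m hη
  refine ⟨2 / (a * η), by positivity, K 0 / 2 * μ * (a * η / 2) ^ 2, by positivity,
    fun {p x F b} hx {h} hh hc hh' z hz => ?_⟩
  rw [div_lt_iff₀ (by positivity)] at hc
  have hG := hx.isCoerciveWith_localGram (N := a * η / 2 * (p * h)) hK (half_pos hK0)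
    (fun u hu => hKr u ((hu.trans_eq hρη).trans (min_le_left _ _))) hμ hle hη
    (hρη.trans_le (min_le_right _ _)) hh hh' (by linarith) (by linarith) hz
  rwa [mul_pow, ← mul_assoc] at hG

theorem abs_lpWeight_le {M X : ℝ}
    (hG : IsCoerciveWith (localGram K (monomialVector m) (orderedPairs p) (scaledPair x h z))
      (μ * X ^ 2)) (hM : ∀ v, ‖K v • monomialVector m v‖ ≤ M) (j k : Fin p) :
    |lpWeight m K x h z j k| ≤ M / μ / X ^ 2 := by
  refine (abs_localWeight_le hG hM _ _).trans_eq ?_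
  rw [PiLp.norm_single, norm_one, mul_one, div_div]

theorem abs_lpWeight_sub_le {M R X : ℝ} {L₁ L₂ : ℝ≥0} (hh : 0 < h) (hX : X ≠ 0)
    (hK : ∀ u, 1 < ‖u‖ → K u = 0)
    (hL₁ : LipschitzWith L₁ fun v => K v • monomialVector m v)
    (hL₂ : LipschitzWith L₂ fun v => K v • rankOne ℝ (monomialVector m v) (monomialVector m v))
    (hM : ∀ v, ‖K v • monomialVector m v‖ ≤ M)
    (hG : ∀ z ∈ upperT, IsCoerciveWith
      (localGram K (monomialVector m) (orderedPairs p) (scaledPair x h z)) (μ * X ^ 2))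
    (hcard : ∀ z ∈ upperT, #{e ∈ orderedPairs p | ‖scaledPair x h z e‖ ≤ 1} ≤ (R * X) ^ 2)
    (hz : z ∈ upperT) (hz' : z' ∈ upperT) (j k : Fin p) :
    |lpWeight m K x h z j k - lpWeight m K x h z' j k| ≤
      (L₁ / μ + 2 * M * R ^ 2 * L₂ / μ ^ 2) / X ^ 2 * (max |z.1 - z'.1| |z.2 - z'.2| / h) := by
  have hmove (e : Fin p × Fin p) := (norm_scaledPair_sub (x := x) hh z z' e).le
  have hD := norm_localGram_sub_le hL₂ hK (by positivity) (fun e _ => hmove e) (hcard z hz)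
    (hcard z' hz')
  have hw := abs_localWeight_sub_le (hG z hz) (hG z' hz') hM hL₁ hD
    (EuclideanSpace.single (MIdx.zero m) 1) (hmove (j, k))
  rw [PiLp.norm_single, norm_one, mul_one] at hw
  refine hw.trans_eq ?_
  field_simp

theorem isLocalPolynomialWeight_lpWeight {M R : ℝ} {L₁ L₂ : ℝ≥0} (hh : 0 < h) (hp : p ≠ 0)
    (hK : ∀ u, 1 < ‖u‖ → K u = 0)
    (hL₁ : LipschitzWith L₁ fun v => K v • monomialVector m v)
    (hL₂ : LipschitzWith L₂ fun v => K v • rankOne ℝ (monomialVector m v) (monomialVector m v))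
    (hM : ∀ v, ‖K v • monomialVector m v‖ ≤ M) (hμ : 0 < μ)
    (hG : ∀ z ∈ upperT, IsCoerciveWith
      (localGram K (monomialVector m) (orderedPairs p) (scaledPair x h z)) (μ * (p * h) ^ 2))
    (hcard : ∀ z ∈ upperT,
      #{e ∈ orderedPairs p | ‖scaledPair x h z e‖ ≤ 1} ≤ (R * (p * h)) ^ 2) :
    IsLocalPolynomialWeight m K x h (M / μ)
      (2 * (M / μ) + (L₁ / μ + 2 * M * R ^ 2 * L₂ / μ ^ 2)) (lpWeight m K x h) where
  minimizer z hz data :=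
    ⟨existsUnique_lpLoss_minimizer (hG z hz) data, fun _ => lpLoss_minimizer_apply_zero (hG z hz)⟩
  reproduces z hz := lpWeight_reproduces hh.ne' (hG z hz)
  eq_zero _ _ _ _ := lpWeight_eq_zero hh hK
  abs_le z hz := abs_lpWeight_le (hG z hz) hM
  abs_sub_le z hz z' hz' j k := by
    have hM0 : 0 ≤ M := (norm_nonneg _).trans (hM 0)
    have hbdd : |lpWeight m K x h z j k - lpWeight m K x h z' j k| ≤
        2 * (M / μ) / (p * h) ^ 2 := by
      refine (abs_sub _ _).trans ?_
      rw [mul_div_assoc, two_mul]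
      exact add_le_add (abs_lpWeight_le (hG z hz) hM j k) (abs_lpWeight_le (hG z' hz') hM j k)
    have hlip := abs_lpWeight_sub_le hh (by positivity) hK hL₁ hL₂ hM hG hcard hz hz' j k
    rw [mul_min_of_nonneg _ _ (by positivity)]
    refine le_min (hlip.trans ?_) (hbdd.trans ?_)
    · gcongr ?_ / _ * _
      refine le_add_of_nonneg_left ?_
      positivity
    · rw [mul_one]
      gcongr
      refine le_add_of_nonneg_right ?_
      positivity

end LocalPolynomial

theorem local_polynomial_weights_general (m : ℕ) {K : ℝ × ℝ → ℝ} {L : ℝ≥0} (hK : ∀ u, 0 ≤ K u)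
    (hK0 : 0 < K 0) (hKL : LipschitzWith L K) (hK1 : ∀ u, 1 < ‖u‖ → K u = 0) (a b : ℝ) :
    ∃ c C₁ C₂ : ℝ, 0 < c ∧ 0 < C₁ ∧ 0 < C₂ ∧
      ∀ {p : ℕ} {x : Fin p → ℝ} {F : ℝ → ℝ}, IsQuantileDesign F a b x →
        ∀ {h : ℝ}, c < p * h → h ≤ 1 / 4 →
          IsLocalPolynomialWeight m K x h C₁ C₂ (lpWeight m K x h) := by
  rcases le_or_gt a 0 with ha | ha
  · exact ⟨1, 1, 1, one_pos, one_pos, one_pos, fun hx => absurd hx.pos ha.not_gt⟩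
  have hKc : HasCompactSupport K := HasCompactSupport.intro (isCompact_closedBall 0 1) fun u hu =>
    hK1 u (by simpa using hu)
  have hφ : ContDiff ℝ 1 (monomialVector m) := contDiff_monomialVector
  obtain ⟨L₁, hL₁⟩ := exists_lipschitzWith_smul_of_hasCompactSupport hKL hKc hφ
  obtain ⟨L₂, hL₂⟩ :=
    exists_lipschitzWith_smul_of_hasCompactSupport hKL hKc (contDiff_rankOne_self hφ)
  obtain ⟨M, hM⟩ := (hKc.smul_right (f' := monomialVector m)).exists_bound_of_continuous
    hL₁.continuous
  replace hM (v) := (hM v).trans (le_max_left M 1)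
  obtain ⟨c, hc, μ, hμ, hG⟩ :=
    exists_isCoerciveWith_localGram_monomialVector m hK hK0 hKL.continuous.continuousAt ha
  refine ⟨c, max M 1 / μ,
    2 * (max M 1 / μ) + (L₁ / μ + 2 * max M 1 * (2 * b + 1 / c) ^ 2 * L₂ / μ ^ 2),
    hc, by positivity, by positivity, fun {p x F} hx {h} hch hh' => ?_⟩
  have hp : 0 < p := Nat.pos_of_ne_zero fun hp => by simp [hp, hc.not_gt] at hch
  have hX : 0 < p * h := hc.trans hch
  have hh : 0 < h := pos_of_mul_pos_right hX p.cast_nonneg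
  refine isLocalPolynomialWeight_lpWeight hh hp.ne' hK1 hL₁ hL₂ hM hμ
    (hG hx hh hch hh') fun z hz => (hx.card_filter_norm_scaledPair_le hh hz).trans ?_
  have hb : 0 ≤ b := hx.pos.le.trans hx.le
  have hone : 1 ≤ 1 / c * (p * h) := by
    rw [one_div_mul_eq_div, one_le_div hc]
    exact hch.le
  gcongr
  linarith

/-- **Local polynomial weights satisfy the weight assumptions (Lemma 8 / Lemma `locpol`).**
Let the kernel `K ≥ 0` be Lipschitz continuous, compactly supported in `[−1,1]²`, with
`K_min 𝟙{−Δ ≤ u₁,u₂ ≤ Δ} ≤ K ≤ K_max`.  Under Assumption 4 there are, for each order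
`m ∈ ℕ`, a large enough `p₀ ∈ ℕ`, small enough `h₀ > 0` and large enough `c > 0`, together
with constants `C₁, C₂ > 0`, such that for all `p ≥ p₀` and all `h ∈ (c/p, h₀]` the
restricted bivariate local polynomial estimator of order `m` is unique, is the linear
estimator `Σ_{j<k} w_{j,k}(x,y;h) z_{j,k}`, and its weights satisfy (W1) with reproduction
degree `m`, (W2), (W3) and (W4). -/
theorem local_polynomial_weights
    (m : ℕ) (K : ℝ × ℝ → ℝ) (Δ Kmin Kmax : ℝ)
    (hΔ : 0 < Δ) (hKmin : 0 < Kmin) (hKmax : 0 < Kmax)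
    (hK0 : ∀ u, 0 ≤ K u)
    (hKlip : ∃ Kl : NNReal, LipschitzWith Kl K)
    (hKsupp : ∀ u : ℝ × ℝ, ¬(|u.1| ≤ 1 ∧ |u.2| ≤ 1) → K u = 0)
    (hKbd : ∀ u : ℝ × ℝ, K u ≤ Kmax ∧
      (u.1 ∈ Set.Icc (-Δ) Δ → u.2 ∈ Set.Icc (-Δ) Δ → Kmin ≤ K u))
    (f : ℝ → ℝ) (fmin fmax : ℝ) :
    ∃ (p₀ : ℕ) (h₀ c C₁ C₂ : ℝ), 0 < h₀ ∧ 0 < c ∧ 0 < C₁ ∧ 0 < C₂ ∧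
      ∀ (p : ℕ), p₀ ≤ p → ∀ x : Fin p → ℝ, DesignQuantile f fmin fmax x →
      ∀ h ∈ Set.Ioc (c / p) h₀,
        ∃ w : ℝ × ℝ → Fin p → Fin p → ℝ,
          -- uniqueness of the minimizer and linear representation of its first coordinate
          (∀ z ∈ upperT, ∀ data : Fin p → Fin p → ℝ,
            (∃! θ : MIdx m → ℝ, ∀ θ' : MIdx m → ℝ,
              lpLoss m K x h z data θ ≤ lpLoss m K x h z data θ') ∧
            (∀ θ : MIdx m → ℝ,
              (∀ θ' : MIdx m → ℝ, lpLoss m K x h z data θ ≤ lpLoss m K x h z data θ') →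
              θ ⟨(0, 0), by simp⟩ = pairSum (fun j k => w z j k * data j k))) ∧
          -- (W1) with reproduction degree m
          (∀ z ∈ upperT, pairSum (w z) = 1 ∧
            ∀ r₁ r₂ : ℕ, 0 < r₁ + r₂ → r₁ + r₂ ≤ m →
              pairSum (fun j k => (x j - z.1) ^ r₁ * (x k - z.2) ^ r₂ * w z j k) = 0) ∧
          -- (W2)
          (∀ z ∈ upperT, ∀ j k : Fin p,
            h < max |x j - z.1| |x k - z.2| → w z j k = 0) ∧
          -- (W3)
          (∀ z ∈ upperT, ∀ j k : Fin p, |w z j k| ≤ C₁ / ((p : ℝ) * h) ^ 2) ∧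
          -- (W4)
          (∀ z ∈ upperT, ∀ z' ∈ upperT, ∀ j k : Fin p,
            |w z j k - w z' j k|
              ≤ C₂ / ((p : ℝ) * h) ^ 2 * min (max |z.1 - z'.1| |z.2 - z'.2| / h) 1) := by
  obtain ⟨L, hKL⟩ := hKlip
  have hK00 : 0 < K 0 := hKmin.trans_le ((hKbd 0).2 (by simp [hΔ.le]) (by simp [hΔ.le]))
  obtain ⟨c, C₁, C₂, hc, hC₁, hC₂, hw⟩ := local_polynomial_weights_general m hK0 hK00 hKL
    (fun u hu => hKsupp u fun hu' => hu.not_ge (max_le hu'.1 hu'.2)) fmin fmax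
  refine ⟨1, 1 / 4, c, C₁, C₂, by norm_num, hc, hC₁, hC₂, fun p hp x hx h hh => ?_⟩
  have hch : c < p * h := (div_lt_iff₀' (by positivity)).1 hh.1
  obtain ⟨hmin, hrep, hzero, hbound, hlip⟩ := hw hx.isQuantileDesign hch hh.2
  exact ⟨_, hmin, hrep, hzero, hbound, hlip⟩
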